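/- Let F be an EUF formula containing m syntactically distinct function application terms. If F is valid over some nonempty domain D with |D| ≥ m, then F is universally valid. -/

import Mathlib

mutual
inductive EufTerm (Fn Pr : Type) : Type
  | app : Fn → List (EufTerm Fn Pr) → EufTerm Fn Pr
  | ite : EufFormula Fn Pr → EufTerm Fn Pr → EufTerm Fn Pr → EufTerm Fn Pr
inductive EufFormula (Fn Pr : Type) : Type
  | tt : EufFormula Fn Pr
  | ff : EufFormula Fn Pr
  | not : EufFormula Fn Pr → EufFormula Fn Pr
  | and : EufFormula Fn Pr → EufFormula Fn Pr → EufFormula Fn Pr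
  | or : EufFormula Fn Pr → EufFormula Fn Pr → EufFormula Fn Pr
  | eq : EufTerm Fn Pr → EufTerm Fn Pr → EufFormula Fn Pr
  | papp : Pr → List (EufTerm Fn Pr) → EufFormula Fn Pr
end

structure Interp (Fn Pr : Type) (D : Type u) where
  fn : Fn → List D → D
  pr : Pr → List D → Bool

open Classical in
mutual
noncomputable def evalT {Fn Pr : Type} {D : Type} (I : Interp Fn Pr D) : EufTerm Fn Pr → D
  | .app f args => I.fn f (args.attach.map (fun t => evalT I t.1))
  | .ite G T1 T2 => if evalF I G then evalT I T1 else evalT I T2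
termination_by t => sizeOf t
decreasing_by
  all_goals simp_wf
  all_goals try omega
  all_goals (have := List.sizeOf_lt_of_mem t.2; omega)
noncomputable def evalF {Fn Pr : Type} {D : Type} (I : Interp Fn Pr D) : EufFormula Fn Pr → Bool
  | .tt => true
  | .ff => false
  | .not G => !evalF I G
  | .and G1 G2 => evalF I G1 && evalF I G2
  | .or G1 G2 => evalF I G1 || evalF I G2
  | .eq T1 T2 => decide (evalT I T1 = evalT I T2)
  | .papp p args => I.pr p (args.attach.map (fun t => evalT I t.1))
termination_by g => sizeOf g
decreasing_by
  all_goals simp_wf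
  all_goals try omega
  all_goals (have := List.sizeOf_lt_of_mem t.2; omega)
end
def ValidOn {Fn Pr : Type} (F : EufFormula Fn Pr) (D : Type) : Prop :=
  ∀ I : Interp Fn Pr D, evalF I F = true

def UniversallyValid {Fn Pr : Type} (F : EufFormula Fn Pr) : Prop :=
  ∀ D : Type, Nonempty D → ValidOn F D

/-- Expressions: terms or formulas. -/
inductive EufExpr (Fn Pr : Type) : Type
  | t : EufTerm Fn Pr → EufExpr Fn Pr
  | f : EufFormula Fn Pr → EufExpr Fn Pr

/-- Immediate (proper) subexpression relation. -/
inductive ImmSub {Fn Pr : Type} : EufExpr Fn Pr → EufExpr Fn Pr → Prop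
  | appArg {g : Fn} {args : List (EufTerm Fn Pr)} {T : EufTerm Fn Pr} :
      T ∈ args → ImmSub (.t T) (.t (.app g args))
  | iteC {G : EufFormula Fn Pr} {T1 T2 : EufTerm Fn Pr} : ImmSub (.f G) (.t (.ite G T1 T2))
  | ite1 {G : EufFormula Fn Pr} {T1 T2 : EufTerm Fn Pr} : ImmSub (.t T1) (.t (.ite G T1 T2))
  | ite2 {G : EufFormula Fn Pr} {T1 T2 : EufTerm Fn Pr} : ImmSub (.t T2) (.t (.ite G T1 T2))
  | not {G : EufFormula Fn Pr} : ImmSub (.f G) (.f (.not G))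
  | andL {G1 G2 : EufFormula Fn Pr} : ImmSub (.f G1) (.f (.and G1 G2))
  | andR {G1 G2 : EufFormula Fn Pr} : ImmSub (.f G2) (.f (.and G1 G2))
  | orL {G1 G2 : EufFormula Fn Pr} : ImmSub (.f G1) (.f (.or G1 G2))
  | orR {G1 G2 : EufFormula Fn Pr} : ImmSub (.f G2) (.f (.or G1 G2))
  | eqL {T1 T2 : EufTerm Fn Pr} : ImmSub (.t T1) (.f (.eq T1 T2))
  | eqR {T1 T2 : EufTerm Fn Pr} : ImmSub (.t T2) (.f (.eq T1 T2))
  | pappArg {p : Pr} {args : List (EufTerm Fn Pr)} {T : EufTerm Fn Pr} :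
      T ∈ args → ImmSub (.t T) (.f (.papp p args))

/-- `SubExpr a b`: `a` occurs (as a subexpression) in `b`. -/
def SubExpr {Fn Pr : Type} (a b : EufExpr Fn Pr) : Prop := Relation.ReflTransGen ImmSub a b

def TermInT {Fn Pr : Type} (T S : EufTerm Fn Pr) : Prop := SubExpr (.t T) (.t S)
def TermInF {Fn Pr : Type} (T : EufTerm Fn Pr) (F : EufFormula Fn Pr) : Prop :=
  SubExpr (.t T) (.f F)
def FormulaInT {Fn Pr : Type} (G : EufFormula Fn Pr) (S : EufTerm Fn Pr) : Prop :=
  SubExpr (.f G) (.t S)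
def FormulaInF {Fn Pr : Type} (G F : EufFormula Fn Pr) : Prop := SubExpr (.f G) (.f F)

def IsAppTerm {Fn Pr : Type} : EufTerm Fn Pr → Prop
  | .app _ _ => True
  | _ => False

/-- `𝒯(F)`: the function application terms occurring in `F`. -/
def AppTermsF {Fn Pr : Type} (F : EufFormula Fn Pr) : Set (EufTerm Fn Pr) :=
  {T | IsAppTerm T ∧ TermInF T F}

/-- A function symbol occurs in `F` when some application of it occurs in `F`. -/
def FnInF {Fn Pr : Type} (g : Fn) (F : EufFormula Fn Pr) : Prop :=
  ∃ args, TermInF (EufTerm.app g args) F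

def PrInF {Fn Pr : Type} (p : Pr) (F : EufFormula Fn Pr) : Prop :=
  ∃ args, FormulaInF (EufFormula.papp p args) F

/-- `I` is diverse for `F` with respect to the set `Sg` of function symbols. -/
def DiverseFor {Fn Pr D : Type} (I : Interp Fn Pr D) (F : EufFormula Fn Pr)
    (Sg : Set Fn) : Prop :=
  ∀ (g : Fn) (args : List (EufTerm Fn Pr)), g ∈ Sg →
    TermInF (EufTerm.app g args) F →
    ∀ T2 ∈ AppTermsF F, evalT I (EufTerm.app g args) = evalT I T2 →
      ∃ args2, T2 = EufTerm.app g args2 ∧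
        List.Forall₂ (fun a b => evalT I a = evalT I b) args args2

mutual
/-- PEUF g-terms, where `isP` designates the p-function symbols. -/
inductive IsGTerm {Fn Pr : Type} (isP : Fn → Prop) : EufTerm Fn Pr → Prop
  | ite {G : EufFormula Fn Pr} {T1 T2 : EufTerm Fn Pr} :
      IsGFormula isP G → IsGTerm isP T1 → IsGTerm isP T2 → IsGTerm isP (.ite G T1 T2)
  | app {g : Fn} {args : List (EufTerm Fn Pr)} :
      ¬ isP g → (∀ T ∈ args, IsPTerm isP T) → IsGTerm isP (.app g args)
/-- PEUF p-terms. -/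
inductive IsPTerm {Fn Pr : Type} (isP : Fn → Prop) : EufTerm Fn Pr → Prop
  | g {T : EufTerm Fn Pr} : IsGTerm isP T → IsPTerm isP T
  | ite {G : EufFormula Fn Pr} {T1 T2 : EufTerm Fn Pr} :
      IsGFormula isP G → IsPTerm isP T1 → IsPTerm isP T2 → IsPTerm isP (.ite G T1 T2)
  | app {g : Fn} {args : List (EufTerm Fn Pr)} :
      isP g → (∀ T ∈ args, IsPTerm isP T) → IsPTerm isP (.app g args)
/-- PEUF g-formulas. -/
inductive IsGFormula {Fn Pr : Type} (isP : Fn → Prop) : EufFormula Fn Pr → Prop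
  | tt : IsGFormula isP .tt
  | ff : IsGFormula isP .ff
  | not {G : EufFormula Fn Pr} : IsGFormula isP G → IsGFormula isP (.not G)
  | and {G1 G2 : EufFormula Fn Pr} :
      IsGFormula isP G1 → IsGFormula isP G2 → IsGFormula isP (.and G1 G2)
  | or {G1 G2 : EufFormula Fn Pr} :
      IsGFormula isP G1 → IsGFormula isP G2 → IsGFormula isP (.or G1 G2)
  | eq {T1 T2 : EufTerm Fn Pr} :
      IsGTerm isP T1 → IsGTerm isP T2 → IsGFormula isP (.eq T1 T2)
  | papp {p : Pr} {args : List (EufTerm Fn Pr)} :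
      (∀ T ∈ args, IsPTerm isP T) → IsGFormula isP (.papp p args)
/-- PEUF p-formulas. -/
inductive IsPFormula {Fn Pr : Type} (isP : Fn → Prop) : EufFormula Fn Pr → Prop
  | g {G : EufFormula Fn Pr} : IsGFormula isP G → IsPFormula isP G
  | and {G1 G2 : EufFormula Fn Pr} :
      IsPFormula isP G1 → IsPFormula isP G2 → IsPFormula isP (.and G1 G2)
  | or {G1 G2 : EufFormula Fn Pr} :
      IsPFormula isP G1 → IsPFormula isP G2 → IsPFormula isP (.or G1 G2)
  | eq {T1 T2 : EufTerm Fn Pr} :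
      IsPTerm isP T1 → IsPTerm isP T2 → IsPFormula isP (.eq T1 T2)
end

/-- The p-function symbols occurring in `F`. -/
def PSymbolsIn {Fn Pr : Type} (isP : Fn → Prop) (F : EufFormula Fn Pr) : Set Fn :=
  {g | isP g ∧ FnInF g F}

/-- `I` is maximally diverse for the p-formula `F`. -/
def MaxDiverse {Fn Pr D : Type} (isP : Fn → Prop) (I : Interp Fn Pr D)
    (F : EufFormula Fn Pr) : Prop :=
  DiverseFor I F (PSymbolsIn isP F)

/-- `I'` refines `I` on the term set `Ts`. -/
def RefinesOn {Fn Pr D D' : Type} (I' : Interp Fn Pr D') (I : Interp Fn Pr D)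
    (Ts : Set (EufTerm Fn Pr)) : Prop :=
  ∀ T1 ∈ Ts, ∀ T2 ∈ Ts, evalT I' T1 = evalT I' T2 → evalT I T1 = evalT I T2

def ProperRefinesOn {Fn Pr D D' : Type} (I' : Interp Fn Pr D') (I : Interp Fn Pr D)
    (Ts : Set (EufTerm Fn Pr)) : Prop :=
  RefinesOn I' I Ts ∧
    ∃ T1 ∈ Ts, ∃ T2 ∈ Ts, evalT I T1 = evalT I T2 ∧ evalT I' T1 ≠ evalT I' T2

noncomputable def exprSize {Fn Pr : Type} : EufExpr Fn Pr → ℕ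
  | .t T => sizeOf T
  | .f G => sizeOf G

theorem immSub_size {Fn Pr : Type} {a b : EufExpr Fn Pr} (h : ImmSub a b) :
    exprSize a < exprSize b := by
  cases h <;> simp only [exprSize, EufTerm.app.sizeOf_spec, EufTerm.ite.sizeOf_spec,
    EufFormula.not.sizeOf_spec, EufFormula.and.sizeOf_spec, EufFormula.or.sizeOf_spec,
    EufFormula.eq.sizeOf_spec, EufFormula.papp.sizeOf_spec]
  case appArg h => have := List.sizeOf_lt_of_mem h; omega
  case pappArg h => have := List.sizeOf_lt_of_mem h; omega
  all_goals omega

theorem immSub_wf {Fn Pr : Type} : WellFounded (@ImmSub Fn Pr) :=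
  Subrelation.wf (fun h => immSub_size h) (measure exprSize).wf

theorem immSub_finite {Fn Pr : Type} (b : EufExpr Fn Pr) : {a | ImmSub a b}.Finite := by
  have key : ∀ (l : List (EufExpr Fn Pr)), (∀ a, ImmSub a b → a ∈ l) →
      {a | ImmSub a b}.Finite := fun l hl => (List.finite_toSet l).subset hl
  rcases b with (⟨g, args⟩ | ⟨G, T1, T2⟩) | (_ | _ | G | ⟨G1, G2⟩ | ⟨G1, G2⟩ | ⟨T1, T2⟩ | ⟨p, args⟩)
  · exact key (args.map .t) (by rintro a (h | _); simpa using h)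
  · exact key [.f G, .t T1, .t T2] (by rintro a (_ | _) <;> simp)
  · exact key [] (by rintro a ⟨⟩)
  · exact key [] (by rintro a ⟨⟩)
  · exact key [.f G] (by rintro a (_ | _); simp)
  · exact key [.f G1, .f G2] (by rintro a (_ | _) <;> simp)
  · exact key [.f G1, .f G2] (by rintro a (_ | _) <;> simp)
  · exact key [.t T1, .t T2] (by rintro a (_ | _) <;> simp)
  · exact key (args.map .t) (by
      intro a h
      cases h with
      | pappArg h => simpa using h)

theorem subExpr_finite {Fn Pr : Type} (b : EufExpr Fn Pr) : {a | SubExpr a b}.Finite := by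
  induction b using immSub_wf.induction with
  | _ b ih =>
    refine (((immSub_finite b).biUnion ih).union (Set.finite_singleton b)).subset ?_
    intro a h
    rcases Relation.ReflTransGen.cases_tail h with h | ⟨c, h1, h2⟩
    · right; exact h.symm
    · left; simp only [Set.mem_iUnion]; exact ⟨c, h2, h1⟩

theorem appTermsF_finite {Fn Pr : Type} (F : EufFormula Fn Pr) : (AppTermsF F).Finite := by
  have := (subExpr_finite (.f F)).preimage (f := EufExpr.t)
    (fun a _ b _ h => by injection h)
  exact this.subset (fun T h => h.2)

theorem transfer {Fn Pr D D' : Type} (F : EufFormula Fn Pr) (I' : Interp Fn Pr D')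
    (e : D' → D) (g : D → D') (hg : ∀ v ∈ evalT I' '' AppTermsF F, g (e v) = v)
    (b : EufExpr Fn Pr) (hb : SubExpr b (.f F)) :
    let I : Interp Fn Pr D :=
      ⟨fun f ds => e (I'.fn f (ds.map g)), fun p ds => I'.pr p (ds.map g)⟩
    match b with
    | .t T => evalT I T = e (evalT I' T) ∧ evalT I' T ∈ evalT I' '' AppTermsF F
    | .f G => evalF I G = evalF I' G := by
  intro I
  induction b using immSub_wf.induction with
  | _ b ih =>
    have ihT : ∀ T, ImmSub (.t T) b → evalT I T = e (evalT I' T) ∧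
        evalT I' T ∈ evalT I' '' AppTermsF F :=
      fun T h => ih (.t T) h (Relation.ReflTransGen.head h hb)
    have ihF : ∀ G, ImmSub (.f G) b → evalF I G = evalF I' G :=
      fun T h => ih (.f T) h (Relation.ReflTransGen.head h hb)
    clear ih
    have hargs : ∀ args : List (EufTerm Fn Pr), (∀ T ∈ args, ImmSub (.t T) b) →
        (args.attach.map (fun t => evalT I t.1)).map g
          = args.attach.map (fun t => evalT I' t.1) := by
      intro args h
      rw [List.map_map]
      apply List.map_congr_left
      intro t _
      obtain ⟨h1, h2⟩ := ihT t.1 (h _ t.2)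
      simp only [Function.comp, h1, hg _ h2]
    rcases b with (⟨f, args⟩ | ⟨G, T1, T2⟩) | (_ | _ | G | ⟨G1, G2⟩ | ⟨G1, G2⟩ | ⟨T1, T2⟩ | ⟨p, args⟩)
    · refine ⟨?_, EufTerm.app f args, ⟨trivial, hb⟩, rfl⟩
      rw [evalT, evalT, ← hargs args (fun T h => .appArg h)]
    · have hG := ihF G .iteC
      have h1 := ihT T1 .ite1
      have h2 := ihT T2 .ite2
      simp only [evalT, hG]
      split <;> assumption
    · simp only [evalF]
    · simp only [evalF]
    · simp only [evalF, ihF G .not]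
    · simp only [evalF, ihF G1 .andL, ihF G2 .andR]
    · simp only [evalF, ihF G1 .orL, ihF G2 .orR]
    · have h1 := ihT T1 .eqL
      have h2 := ihT T2 .eqR
      simp only [evalF, h1.1, h2.1, decide_eq_decide]
      constructor
      · intro h
        rw [← hg _ h1.2, ← hg _ h2.2, h]
      · intro h; rw [h]
    · simp only [evalF]
      rw [← hargs args (fun T h => .pappArg h)]

/-- **Statement 19.** If `F` contains `m` syntactically distinct function application terms
and is valid over a nonempty domain of cardinality at least `m`, then `F` is universally
valid. -/
theorem valid_large_domain {Fn Pr : Type} (F : EufFormula Fn Pr) (m : ℕ)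
    (hm : (AppTermsF F).ncard = m) (D : Type) (hD : Nonempty D)
    (hcard : (m : Cardinal) ≤ Cardinal.mk D) (hvalid : ValidOn F D) :
    UniversallyValid F := by
  classical
  intro D' hD' I'
  have hfin := appTermsF_finite F
  have hle : Cardinal.mk (evalT I' '' AppTermsF F) ≤ Cardinal.mk D := by
    refine Cardinal.mk_image_le.trans (le_trans ?_ hcard)
    rw [← hm, Set.cast_ncard hfin]
  obtain ⟨k⟩ := Cardinal.le_def _ _ |>.1 hle
  let e : D' → D := fun v => if h : v ∈ evalT I' '' AppTermsF F then k ⟨v, h⟩ else hD.some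
  have he : Set.InjOn e (evalT I' '' AppTermsF F) := by
    intro a ha b hb h
    simp only [e, dif_pos ha, dif_pos hb] at h
    simpa using k.injective h
  have hg := he.leftInvOn_invFunOn
  have := transfer F I' e _ (fun v hv => hg hv) (.f F) Relation.ReflTransGen.refl
  exact this.symm.trans (hvalid _)
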